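/- arXiv:1702.05543 — 5 statements merged into one kernel-verified Lean document; each statement's English description precedes it below -/
import Mathlib

section
/- Let G = (U,V,E) be a bipartite graph with |U| = s. For an integer i ≥ 0, let G_i be the bipartite graph obtained from G by adding s+i new disjoint matching edges, where each new edge has one endpoint added to the left class and one endpoint added to the right class. For j ∈ {0,…,s}, let x_j be the number of independent sets of G of maximum size μ(G) that have exactly s−j vertices in U. Let w_i be the number of independent sets of G_i of maximum size μ(G_i) = μ(G)+s+i that have exactly s vertices in the left class of G_i. Then w_i = Σ_{j=0}^{s} x_j · C(s+i, j). -/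
/-- The adjacency relation of the bipartite graph `G_i` obtained from a bipartite graph
with edge relation `E : U → V → Prop` by adding `m` new disjoint matching edges:
the `a`-th new left vertex is joined precisely to the `a`-th new right vertex. -/
def matchingExtAdj {U V : Type*} (E : U → V → Prop) {m : ℕ} :
    U ⊕ Fin m → V ⊕ Fin m → Prop
  | Sum.inl u, Sum.inl v => E u v
  | Sum.inr a, Sum.inr b => a = b
  | _, _ => False

/-- Let `G = (U,V,E)` be a bipartite graph with `|U| = s`, and let `G_i` be obtained
from `G` by adding `s + i` new disjoint matching edges (one endpoint in each class).
An independent set is represented as a pair `p = (p.1, p.2)` of its left and right parts,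
with no edge between them. If `μ = μ(G)` is the maximum size of an independent set of `G`,
`x j` is the number of size-`μ` independent sets of `G` with exactly `s - j` vertices in `U`,
and `w` is the number of independent sets of `G_i` of size `μ(G_i) = μ + s + i` with
exactly `s` vertices in the left class, then `w = ∑_{j=0}^{s} x j * C(s+i, j)`. -/
theorem stmt2 {U V : Type*} [Fintype U] [Fintype V] (E : U → V → Prop)
    (s : ℕ) (hs : Fintype.card U = s) (i : ℕ) (μ : ℕ)
    (hμ : IsGreatest {n | ∃ p : Finset U × Finset V,
        (∀ u ∈ p.1, ∀ v ∈ p.2, ¬ E u v) ∧ p.1.card + p.2.card = n} μ)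
    (x : ℕ → ℕ)
    (hx : ∀ j, x j = Set.ncard {p : Finset U × Finset V |
        (∀ u ∈ p.1, ∀ v ∈ p.2, ¬ E u v) ∧ p.1.card + p.2.card = μ ∧ p.1.card = s - j})
    (w : ℕ)
    (hw : w = Set.ncard {p : Finset (U ⊕ Fin (s + i)) × Finset (V ⊕ Fin (s + i)) |
        (∀ u ∈ p.1, ∀ v ∈ p.2, ¬ matchingExtAdj E u v) ∧
        p.1.card + p.2.card = μ + s + i ∧ p.1.card = s}) :
    w = ∑ j ∈ Finset.range (s + 1), x j * (s + i).choose j := by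
  classical
  subst hw
  have hX : ∀ j, x j = (Finset.univ.filter fun p : Finset U × Finset V =>
      (∀ u ∈ p.1, ∀ v ∈ p.2, ¬ E u v) ∧ p.1.card + p.2.card = μ ∧ p.1.card = s - j).card := by
    intro j
    rw [hx j, ← Set.ncard_coe_finset]
    congr 1
    ext p
    simp
  have hW : {p : Finset (U ⊕ Fin (s + i)) × Finset (V ⊕ Fin (s + i)) |
        (∀ u ∈ p.1, ∀ v ∈ p.2, ¬ matchingExtAdj E u v) ∧
        p.1.card + p.2.card = μ + s + i ∧ p.1.card = s} =
      ((Finset.univ.filter fun p : Finset (U ⊕ Fin (s + i)) × Finset (V ⊕ Fin (s + i)) =>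
        (∀ u ∈ p.1, ∀ v ∈ p.2, ¬ matchingExtAdj E u v) ∧
        p.1.card + p.2.card = μ + s + i ∧ p.1.card = s :
        Finset (Finset (U ⊕ Fin (s + i)) × Finset (V ⊕ Fin (s + i)))) : Set _) := by
    ext p
    simp
  rw [hW, Set.ncard_coe_finset]
  have hT : ∑ j ∈ Finset.range (s + 1), x j * (s + i).choose j =
      ((Finset.range (s + 1)).sigma fun j =>
        (Finset.univ.filter fun p : Finset U × Finset V =>
          (∀ u ∈ p.1, ∀ v ∈ p.2, ¬ E u v) ∧ p.1.card + p.2.card = μ ∧ p.1.card = s - j) ×ˢ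
        Finset.powersetCard j (Finset.univ : Finset (Fin (s + i)))).card := by
    rw [Finset.card_sigma]
    refine Finset.sum_congr rfl fun j _ => ?_
    rw [Finset.card_product, Finset.card_powersetCard, hX j, Finset.card_univ, Fintype.card_fin]
  rw [hT]
  symm
  refine Finset.card_bij (fun t _ => (t.2.1.1.disjSum t.2.2, t.2.1.2.disjSum t.2.2ᶜ)) ?_ ?_ ?_
  · rintro ⟨j, ⟨P, Q⟩, A⟩ h
    simp only [Finset.mem_sigma, Finset.mem_range, Finset.mem_product, Finset.mem_filter,
      Finset.mem_univ, true_and, Finset.mem_powersetCard, Finset.subset_univ] at h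
    obtain ⟨hj, ⟨hI, hc, hP⟩, hA⟩ := h
    simp only [Finset.mem_filter, Finset.mem_univ, true_and, Finset.card_disjSum,
      Finset.card_compl, Fintype.card_fin]
    refine ⟨?_, by omega, by omega⟩
    rintro (u | a) hu (v | b) hv
    · exact hI u (by simpa using hu) v (by simpa using hv)
    · simp [matchingExtAdj]
    · simp [matchingExtAdj]
    · simp at hu hv
      simp only [matchingExtAdj]
      rintro rfl
      exact hv hu
  · rintro ⟨j, ⟨P, Q⟩, A⟩ h ⟨j', ⟨P', Q'⟩, A'⟩ h' heq
    simp only [Finset.mem_sigma, Finset.mem_product, Finset.mem_powersetCard] at h h'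
    have e1 := congrArg Prod.fst heq
    have e2 := congrArg Prod.snd heq
    have a1 := congrArg Finset.toLeft e1
    have a2 := congrArg Finset.toRight e1
    have a3 := congrArg Finset.toLeft e2
    simp at a1 a2 a3
    subst a1 a2 a3
    obtain rfl : j = j' := h.2.2.2.symm.trans h'.2.2.2
    rfl
  · rintro ⟨P, Q⟩ h
    simp only [Finset.mem_filter, Finset.mem_univ, true_and] at h
    obtain ⟨hI, hc, hP⟩ := h
    have hI' : ∀ u ∈ P.toLeft, ∀ v ∈ Q.toLeft, ¬ E u v := by
      intro u hu v hv
      exact hI (Sum.inl u) (by simpa using hu) (Sum.inl v) (by simpa using hv)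
    have hD : Q.toRight ⊆ P.toRightᶜ := by
      intro a ha
      rw [Finset.mem_compl]
      intro ha'
      exact hI (Sum.inr a) (by simpa using ha') (Sum.inr a) (by simpa using ha) rfl
    have hle : P.toLeft.card + Q.toLeft.card ≤ μ := hμ.2 ⟨(P.toLeft, Q.toLeft), hI', rfl⟩
    have c1 : P.toLeft.card + P.toRight.card = P.card := Finset.card_toLeft_add_card_toRight
    have c2 : Q.toLeft.card + Q.toRight.card = Q.card := Finset.card_toLeft_add_card_toRight
    have c3 := Finset.card_le_card hD
    have c4 := Finset.card_add_card_compl P.toRight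
    rw [Fintype.card_fin] at c4
    have hE : Q.toRight = P.toRightᶜ := Finset.eq_of_subset_of_card_le hD (by omega)
    have c5 := congrArg Finset.card hE
    refine ⟨⟨P.toRight.card, (P.toLeft, Q.toLeft), P.toRight⟩, ?_, ?_⟩
    · simp only [Finset.mem_sigma, Finset.mem_range, Finset.mem_product, Finset.mem_filter,
        Finset.mem_univ, true_and, Finset.mem_powersetCard, Finset.subset_univ, and_true]
      exact ⟨by omega, hI', by omega, by omega⟩
    · simp only [← hE, Finset.toLeft_disjSum_toRight]
end

section
/- For every non-negative integer s, the (s+1)×(s+1) matrix M over ℚ whose rows and columns are indexed by {0,…,s} and whose entries are M_{i,j} = C(s+i, j) is invertible. -/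
/-- The `(s+1) × (s+1)` matrix over `ℚ` with rows and columns indexed by `{0,…,s}`
whose `(i,j)` entry is the binomial coefficient `C(s+i, j)` is invertible. -/
theorem stmt3 (s : ℕ) :
    IsUnit (Matrix.of fun i j : Fin (s + 1) => ((s + (i : ℕ)).choose (j : ℕ) : ℚ)) := by
  rw [Matrix.isUnit_iff_isUnit_det, isUnit_iff_ne_zero]
  intro h0
  have h := Matrix.det_eval_matrixOfPolynomials_eq_det_vandermonde
    (fun i : Fin (s + 1) => (((s + (i : ℕ) : ℕ)) : ℚ))
    (fun j => descPochhammer ℚ (j : ℕ))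
    (fun j => descPochhammer_natDegree ℚ j) (fun j => monic_descPochhammer ℚ j)
  have hv : (Matrix.vandermonde (fun i : Fin (s + 1) => (((s + (i : ℕ) : ℕ)) : ℚ))).det ≠ 0 := by
    rw [Matrix.det_vandermonde_ne_zero_iff]
    intro a b hab
    have : s + (a : ℕ) = s + (b : ℕ) := Nat.cast_injective (R := ℚ) hab
    exact Fin.ext (by omega)
  apply hv
  rw [h]
  have hm : (Matrix.of fun i j : Fin (s + 1) =>
      (descPochhammer ℚ (j : ℕ)).eval (((s + (i : ℕ) : ℕ)) : ℚ)) =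
      (Matrix.of fun i j : Fin (s + 1) => ((s + (i : ℕ)).choose (j : ℕ) : ℚ)) *
        Matrix.diagonal (fun j : Fin (s + 1) => (((j : ℕ).factorial : ℕ) : ℚ)) := by
    ext i j
    rw [Matrix.mul_diagonal, Matrix.of_apply, Matrix.of_apply,
      descPochhammer_eval_eq_descFactorial, Nat.descFactorial_eq_factorial_mul_choose]
    push_cast
    ring
  rw [hm, Matrix.det_mul, h0, zero_mul]
end

section
/- Let k ≥ 2, let G = (V,E) be a finite simple graph containing at least one k-clique, and let ℓ = C(k,2). Let G'' be the bipartite graph with left class U = {u_e : e ∈ E}, right class V, and edges (u_e, v) whenever v is an endpoint of e. Then the number of ℓ-left-maximum independent sets of G'' equals the number of k-cliques of G. -/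
/-- Edges of `G` with both endpoints in `s`. -/
def innerEdges {V : Type*} [Fintype V] [DecidableEq V] (G : SimpleGraph V)
    [DecidableRel G.Adj] (s : Finset V) : Finset G.edgeSet :=
  Finset.univ.filter fun e => ∀ v ∈ (e : Sym2 V), v ∈ s

lemma innerEdges_sub {V : Type*} [Fintype V] [DecidableEq V] (G : SimpleGraph V)
    [DecidableRel G.Adj] (s : Finset V) :
    (innerEdges G s).map (Function.Embedding.subtype _) ⊆
      s.offDiag.image (fun x => s(x.1, x.2)) := by
  intro e he
  simp only [innerEdges, Finset.mem_map, Finset.mem_filter, Finset.mem_univ, true_and] at he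
  obtain ⟨⟨e, hG⟩, h, rfl⟩ := he
  induction e using Sym2.ind with
  | _ a b =>
    have hab : G.Adj a b := hG
    simp only [Finset.mem_image, Finset.mem_offDiag]
    exact ⟨(a, b), ⟨h a (by simp), h b (by simp), hab.ne⟩, rfl⟩

lemma innerEdges_card_le {V : Type*} [Fintype V] [DecidableEq V] (G : SimpleGraph V)
    [DecidableRel G.Adj] (s : Finset V) :
    (innerEdges G s).card ≤ s.card.choose 2 := by
  have h := Finset.card_le_card (innerEdges_sub G s)
  rw [Finset.card_map] at h
  exact h.trans (Sym2.card_image_offDiag s).le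

lemma innerEdges_card_eq_iff {V : Type*} [Fintype V] [DecidableEq V] (G : SimpleGraph V)
    [DecidableRel G.Adj] (s : Finset V) :
    (innerEdges G s).card = s.card.choose 2 ↔ G.IsClique (s : Set V) := by
  have hc : (s.offDiag.image (fun x => s(x.1, x.2))).card = s.card.choose 2 :=
    Sym2.card_image_offDiag s
  constructor
  · intro h a ha b hb hab
    have heq := Finset.eq_of_subset_of_card_le (innerEdges_sub G s)
      (by rw [Finset.card_map, h, hc])
    have hm : s(a, b) ∈ s.offDiag.image (fun x => s(x.1, x.2)) :=
      Finset.mem_image.2 ⟨(a, b), Finset.mem_offDiag.2 ⟨ha, hb, hab⟩, rfl⟩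
    rw [← heq, Finset.mem_map] at hm
    obtain ⟨⟨e, hG⟩, _, he⟩ := hm
    have he' : e = s(a, b) := he
    rw [he'] at hG
    exact hG
  · intro h
    rw [← hc, ← Finset.card_map (Function.Embedding.subtype _)]
    congr 1
    apply Finset.Subset.antisymm (innerEdges_sub G s)
    intro e he
    obtain ⟨⟨a, b⟩, hab, rfl⟩ := Finset.mem_image.1 he
    obtain ⟨ha, hb, hne⟩ := Finset.mem_offDiag.1 hab
    refine Finset.mem_map.2 ⟨⟨s(a, b), h ha hb hne⟩, ?_, rfl⟩
    simp only [innerEdges, Finset.mem_filter, Finset.mem_univ, true_and]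
    intro v hv
    rcases Sym2.mem_iff.1 hv with rfl | rfl
    · exact ha
    · exact hb


/-- Let `k ≥ 2` and let `G` be a finite simple graph containing at least one `k`-clique,
and let `ℓ = C(k,2)`.  Let `G''` be the bipartite graph whose left class is the edge set
of `G`, whose right class is `V(G)`, and where an edge `e` is joined to a vertex `v` iff
`v ∈ e`.  Independent sets of `G''` are represented as pairs `p = (p.1, p.2)` of their
left and right parts; such a set is `ℓ`-left-maximum if `|p.1| = ℓ` and its total size
equals the maximum total size `μ` over all independent sets with `ℓ` left vertices.
Then the number of `ℓ`-left-maximum independent sets of `G''` equals the number of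
`k`-cliques of `G`. -/
theorem stmt11 {V : Type*} [Fintype V] [DecidableEq V] (k : ℕ) (hk : 2 ≤ k)
    (G : SimpleGraph V) [DecidableRel G.Adj]
    (hclique : ∃ s : Finset V, G.IsNClique k s)
    (ℓ : ℕ) (hℓ : ℓ = k.choose 2) (μ : ℕ)
    (hμ : IsGreatest {n | ∃ p : Finset G.edgeSet × Finset V,
        (∀ e ∈ p.1, ∀ v ∈ p.2, v ∉ (e : Sym2 V)) ∧ p.1.card = ℓ ∧
        p.1.card + p.2.card = n} μ) :
    Set.ncard {p : Finset G.edgeSet × Finset V |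
        (∀ e ∈ p.1, ∀ v ∈ p.2, v ∉ (e : Sym2 V)) ∧ p.1.card = ℓ ∧
        p.1.card + p.2.card = μ}
      = Set.ncard {s : Finset V | G.IsNClique k s} := by
  have hF : ∀ s : Finset V, ∀ e ∈ innerEdges G s, ∀ v ∈ sᶜ, v ∉ (e : Sym2 V) := by
    intro s e he v hv hve
    simp only [innerEdges, Finset.mem_filter, Finset.mem_univ, true_and] at he
    exact Finset.mem_compl.1 hv (he v hve)
  have hsub : ∀ p : Finset G.edgeSet × Finset V,
      (∀ e ∈ p.1, ∀ v ∈ p.2, v ∉ (e : Sym2 V)) → p.1 ⊆ innerEdges G p.2ᶜ := by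
    intro p hp e he
    simp only [innerEdges, Finset.mem_filter, Finset.mem_univ, true_and]
    intro v hv
    rw [Finset.mem_compl]
    exact fun h => hp e he v h hv
  have hge : ∀ p : Finset G.edgeSet × Finset V,
      (∀ e ∈ p.1, ∀ v ∈ p.2, v ∉ (e : Sym2 V)) → p.1.card = ℓ → k ≤ (p.2ᶜ).card := by
    intro p hp hc
    by_contra! hlt
    have h1 := (Finset.card_le_card (hsub p hp)).trans (innerEdges_card_le G p.2ᶜ)
    rw [hc, hℓ] at h1
    have h2 : (p.2ᶜ).card.choose 2 ≤ (k - 1).choose 2 := Nat.choose_le_choose 2 (by omega)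
    obtain ⟨m, rfl⟩ : ∃ m, k = m + 1 := ⟨k - 1, by omega⟩
    rw [Nat.choose_succ_succ' m 1, Nat.choose_one_right] at h1
    simp only [Nat.add_sub_cancel] at h2
    have h3 : m.choose (1 + 1) = m.choose 2 := rfl
    omega
  have hcl : ∀ s : Finset V, G.IsNClique k s → (innerEdges G s).card = ℓ := by
    intro s hs
    rw [(innerEdges_card_eq_iff G s).2 hs.isClique, hs.card_eq, hℓ]
  have hμ' : μ + k = ℓ + Fintype.card V := by
    obtain ⟨⟨p, hp, hpc, hpm⟩, hub⟩ := hμ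
    obtain ⟨s, hs⟩ := hclique
    have h1 := hub ⟨(innerEdges G s, sᶜ), hF s, hcl s hs, rfl⟩
    have h2 := hge p hp hpc
    have h3 := Finset.card_add_card_compl p.2
    have h4 := Finset.card_add_card_compl s
    have h5 := hcl s hs
    have h6 := hs.card_eq
    simp only at h1
    omega
  have himg : {p : Finset G.edgeSet × Finset V |
        (∀ e ∈ p.1, ∀ v ∈ p.2, v ∉ (e : Sym2 V)) ∧ p.1.card = ℓ ∧
        p.1.card + p.2.card = μ}
      = (fun s : Finset V => (innerEdges G s, sᶜ)) '' {s : Finset V | G.IsNClique k s} := by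
    ext p
    simp only [Set.mem_setOf_eq, Set.mem_image]
    constructor
    · rintro ⟨hp, hc, hm⟩
      have h3 := Finset.card_add_card_compl p.2
      have hk' : (p.2ᶜ).card = k := by omega
      have hle := innerEdges_card_le G p.2ᶜ
      rw [hk', ← hℓ] at hle
      have heq := Finset.eq_of_subset_of_card_le (hsub p hp) (by omega)
      refine ⟨p.2ᶜ, ⟨(innerEdges_card_eq_iff G _).1 ?_, hk'⟩, ?_⟩
      · rw [← heq, hc, hk', hℓ]
      · rw [← heq, compl_compl]
    · rintro ⟨s, hs, rfl⟩
      have h4 := Finset.card_add_card_compl s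
      have h5 := hcl s hs
      have h6 := hs.card_eq
      refine ⟨hF s, h5, ?_⟩
      simp only
      omega
  rw [himg]
  apply Set.ncard_image_of_injOn
  intro s _ t _ h
  exact compl_injective (Prod.mk.inj h).2
end

section
/- Let G = (U,V,E) be a bipartite graph on n vertices, let 0 ≤ ℓ ≤ |U|, let μ be the maximum size of an independent set S of G with |S ∩ U| = ℓ, let t be a positive integer, and let G' = (U, V×[t], E') where (u,(v,i)) ∈ E' if and only if (u,v) ∈ E. Then (2^t − 1)^{μ−ℓ} ≤ LIS_ℓ(G') ≤ 2^n · (2^t − 1)^{μ−ℓ}, where LIS_ℓ(G') denotes the number of independent sets S of G' with |S ∩ U| = ℓ. -/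
open Classical in
lemma fiber_card {V : Type*} [Fintype V] (t : ℕ) (B : Finset V) :
    (Finset.univ.filter (fun W : Finset (V × Fin t) => W.image Prod.fst = B)).card
      = (2 ^ t - 1) ^ B.card := by
  have h1 : (Fintype.piFinset (fun v : V =>
      if v ∈ B then (Finset.univ.erase ∅ : Finset (Finset (Fin t))) else {∅})).card
      = (2 ^ t - 1) ^ B.card := by
    rw [Fintype.card_piFinset]
    have : ∀ v : V, (if v ∈ B then (Finset.univ.erase ∅ : Finset (Finset (Fin t))) else {∅}).card
        = if v ∈ B then 2 ^ t - 1 else 1 := by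
      intro v
      split_ifs
      · rw [Finset.card_erase_of_mem (Finset.mem_univ _)]
        simp
      · simp
    simp only [this]
    rw [Finset.prod_ite_mem]
    simp
  rw [← h1]
  refine Finset.card_bij' (fun W _ => fun v => Finset.univ.filter (fun i => (v, i) ∈ W))
    (fun g _ => Finset.univ.filter (fun w => w.2 ∈ g w.1)) ?_ ?_ ?_ ?_
  · intro W hW
    simp only [Finset.mem_filter, Finset.mem_univ, true_and] at hW
    subst hW
    rw [Fintype.mem_piFinset]
    intro v
    split_ifs with hv
    · simp only [Finset.mem_image, Prod.exists] at hv
      obtain ⟨a, i, hi, rfl⟩ := hv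
      simp only [Finset.mem_erase, Finset.mem_univ, and_true]
      exact Finset.ne_empty_of_mem (a := i) (by simpa using hi)
    · simp only [Finset.mem_singleton, Finset.filter_eq_empty_iff]
      intro i _ hi
      exact hv (Finset.mem_image.2 ⟨_, hi, rfl⟩)
  · intro g hg
    rw [Fintype.mem_piFinset] at hg
    simp only [Finset.mem_filter, Finset.mem_univ, true_and]
    ext v
    have := hg v
    simp only [Finset.mem_image, Finset.mem_filter, Finset.mem_univ, true_and, Prod.exists,
      exists_and_right, exists_eq_right]
    split_ifs at this with hv
    · simp only [Finset.mem_erase, Finset.mem_univ, and_true] at this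
      exact iff_of_true (Finset.nonempty_iff_ne_empty.2 this) hv
    · simp only [Finset.mem_singleton] at this
      simp [hv, this]
  · intro W _
    ext ⟨v, i⟩
    simp
  · intro g _
    ext v i
    simp

/-- Let `G = (U,V,E)` be a bipartite graph on `n = |U| + |V|` vertices, `0 ≤ ℓ ≤ |U|`,
and let `μ` be the maximum size of an independent set of `G` with exactly `ℓ` left
vertices (independent sets are represented as pairs of their left and right parts).
Let `t ≥ 1` and let `G' = (U, V × [t], E')` with `(u,(v,i))` an edge iff `(u,v) ∈ E`.
Then `(2^t - 1)^{μ-ℓ} ≤ LIS_ℓ(G') ≤ 2^n · (2^t - 1)^{μ-ℓ}`, where `LIS_ℓ(G')` is the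
number of independent sets of `G'` with exactly `ℓ` left vertices. -/
theorem stmt13 {U V : Type*} [Fintype U] [Fintype V] (E : U → V → Prop)
    (n : ℕ) (hn : n = Fintype.card U + Fintype.card V)
    (ℓ : ℕ) (hℓ : ℓ ≤ Fintype.card U) (μ : ℕ)
    (hμ : IsGreatest {m | ∃ p : Finset U × Finset V,
        (∀ u ∈ p.1, ∀ v ∈ p.2, ¬ E u v) ∧ p.1.card = ℓ ∧ p.1.card + p.2.card = m} μ)
    (t : ℕ) (ht : 0 < t) :
    (2 ^ t - 1) ^ (μ - ℓ)
        ≤ Set.ncard {p : Finset U × Finset (V × Fin t) |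
            (∀ u ∈ p.1, ∀ w ∈ p.2, ¬ E u w.1) ∧ p.1.card = ℓ} ∧
      Set.ncard {p : Finset U × Finset (V × Fin t) |
            (∀ u ∈ p.1, ∀ w ∈ p.2, ¬ E u w.1) ∧ p.1.card = ℓ}
        ≤ 2 ^ n * (2 ^ t - 1) ^ (μ - ℓ) := by
  classical
  rw [Set.ncard_eq_toFinset_card']
  obtain ⟨⟨⟨A, B⟩, hAB, hA, hm⟩, hub⟩ := hμ
  simp only at hAB hA hm
  constructor
  · have hB : μ - ℓ = B.card := by omega
    rw [hB, ← fiber_card t B]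
    refine Finset.card_le_card_of_injOn (fun W => (A, W)) ?_ ?_
    · intro W hW
      have hW : W.image Prod.fst = B := by simpa using hW
      simp only [Set.coe_toFinset, Set.mem_ofPred_eq]
      exact ⟨fun u hu w hw => hAB u hu _ (hW ▸ Finset.mem_image_of_mem _ hw), hA⟩
    · intro W _ W' _ h
      exact (Prod.mk.inj h).2
  · have hc : (2 : ℕ) ^ n = (Finset.univ : Finset (Finset U × Finset V)).card := by
      rw [Finset.card_univ, Fintype.card_prod, Fintype.card_finset, Fintype.card_finset, hn, pow_add]
    rw [hc, mul_comm]
    refine Finset.card_le_mul_card_image_of_maps_to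
      (f := fun p : Finset U × Finset (V × Fin t) => (p.1, p.2.image Prod.fst))
      (fun _ _ => Finset.mem_univ _) _ ?_
    rintro ⟨A', B'⟩ -
    rcases Finset.eq_empty_or_nonempty (Finset.filter
      (fun p : Finset U × Finset (V × Fin t) => (p.1, p.2.image Prod.fst) = (A', B'))
      {p : Finset U × Finset (V × Fin t) |
            (∀ u ∈ p.1, ∀ w ∈ p.2, ¬ E u w.1) ∧ p.1.card = ℓ}.toFinset) with h | ⟨⟨A₀, W⟩, h⟩
    · rw [h]
      simp
    · simp only [Finset.mem_filter, Set.mem_toFinset, Set.mem_ofPred_eq, Prod.mk.injEq] at h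
      obtain ⟨⟨h1, h2⟩, rfl, rfl⟩ := h
      have hle : A₀.card + (W.image Prod.fst).card ≤ μ := by
        refine hub ⟨(A₀, W.image Prod.fst), ?_, h2, rfl⟩
        intro u hu v hv
        obtain ⟨w, hw, rfl⟩ := Finset.mem_image.1 hv
        exact h1 u hu w hw
      have hpos : 0 < 2 ^ t - 1 := by
        have := Nat.one_lt_two_pow ht.ne'
        omega
      refine le_trans ?_ (Nat.pow_le_pow_right hpos
        (show (W.image Prod.fst).card ≤ μ - ℓ by omega))
      rw [← fiber_card t]
      refine Finset.card_le_card_of_injOn Prod.snd ?_ ?_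
      · intro p hp
        simp only [Finset.coe_filter, Set.mem_ofPred_eq, Prod.mk.injEq] at hp
        simpa using hp.2.2
      · rintro ⟨a, b⟩ hp ⟨a', b'⟩ hp' h
        simp only [Finset.coe_filter, Set.mem_ofPred_eq, Prod.mk.injEq] at hp hp' h
        rw [hp.2.1, hp'.2.1, h]
end

section
/- Let G and H be finite simple graphs. Suppose there exists a graph homomorphism from G to H that is surjective on vertices, and also a graph homomorphism from H to G that is surjective on vertices. Then G and H are isomorphic. -/
/-- If there is a vertex-surjective graph homomorphism from the finite simple graph `G`
to the finite simple graph `H`, and also a vertex-surjective graph homomorphism from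
`H` to `G`, then `G` and `H` are isomorphic. -/
theorem stmt17 {V W : Type*} [Fintype V] [Fintype W]
    (G : SimpleGraph V) (H : SimpleGraph W)
    (f : G →g H) (hf : Function.Surjective f)
    (g : H →g G) (hg : Function.Surjective g) :
    Nonempty (G ≃g H) := by
  have hs : Function.Surjective (fun v => g (f v)) := hg.comp hf
  have hi : Function.Injective (fun v => g (f v)) := Finite.injective_iff_surjective.mpr hs
  have hfi : Function.Injective f := fun a b h => hi (congrArg g h)
  -- the map induced by `g ∘ f` on ordered adjacent pairs is injective, hence surjective
  let F : {p : V × V // G.Adj p.1 p.2} → {p : V × V // G.Adj p.1 p.2} :=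
    fun p => ⟨(g (f p.1.1), g (f p.1.2)), g.map_adj (f.map_adj p.2)⟩
  have hF : Function.Injective F := by
    rintro ⟨⟨a, b⟩, h⟩ ⟨⟨c, d⟩, h'⟩ e
    have e' := congrArg Subtype.val e
    have e1 : a = c := hi (congrArg Prod.fst e')
    have e2 : b = d := hi (congrArg Prod.snd e')
    subst e1 e2
    rfl
  have hFs : Function.Surjective F := Finite.injective_iff_surjective.mp hF
  refine ⟨⟨Equiv.ofBijective f ⟨hfi, hf⟩, ?_⟩⟩
  intro u v
  refine ⟨fun h => ?_, fun h => f.map_adj h⟩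
  have h' : G.Adj (g (f u)) (g (f v)) := g.map_adj h
  obtain ⟨⟨⟨a, b⟩, hab⟩, e⟩ := hFs ⟨(g (f u), g (f v)), h'⟩
  have e' := congrArg Subtype.val e
  have e1 : a = u := hi (congrArg Prod.fst e')
  have e2 : b = v := hi (congrArg Prod.snd e')
  subst e1 e2
  exact hab
end
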